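/- Let f(v₁,v₂) = e^{a v₁ + b v₂}/((1-e^{-v₁})³(1-e^{-v₂})³(1-e^{-(v₁+v₂)})³) as a meromorphic function of (v₁,v₂) ∈ ℂ². For nonnegative integers a ≥ b, the iterated residue res_{v₂=0} res_{v₁=0} f (where the inner residue in v₁ is taken with v₂ a fixed nonzero parameter) equals the number of 9-tuples of nonnegative integers (i₁,i₂,i₃,j₁,j₂,j₃,k₁,k₂,k₃) with ∑ i + ∑ k = a, ∑ j + ∑ k = b. -/

import Mathlib

open Complex

/-- The meromorphic function `f(v₁,v₂) = e^{a v₁ + b v₂} /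
((1-e^{-v₁})³ (1-e^{-v₂})³ (1-e^{-(v₁+v₂)})³)`. -/
noncomputable def f (a b : ℕ) (v₁ v₂ : ℂ) : ℂ :=
  Complex.exp (a * v₁ + b * v₂) /
    ((1 - Complex.exp (-v₁)) ^ 3 * (1 - Complex.exp (-v₂)) ^ 3 *
      (1 - Complex.exp (-(v₁ + v₂))) ^ 3)

lemma exp_sub_one_ne_zero_of_norm_lt {v : ℂ} (h0 : v ≠ 0) (h : ‖v‖ < 2 * Real.pi) :
    Complex.exp v - 1 ≠ 0 := by
  intro he
  obtain ⟨n, rfl⟩ := Complex.exp_eq_one_iff.1 (sub_eq_zero.1 he)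
  have hn : n ≠ 0 := by rintro rfl; simp at h0
  have h1 : (1 : ℝ) ≤ |(n : ℝ)| := by exact_mod_cast Int.one_le_abs hn
  have : ‖(n : ℂ) * (2 * Real.pi * I)‖ = |(n : ℝ)| * (2 * Real.pi) := by
    simp [abs_of_pos Real.pi_pos]
  rw [this] at h
  nlinarith [Real.pi_pos]

lemma circleIntegral_exp_div_exp_sub_one {r : ℝ} (h0 : 0 < r) (h : r < 2 * Real.pi) :
    (∮ v in C(0, r), Complex.exp v * (Complex.exp v - 1) ^ (-1 : ℤ)) = 2 * Real.pi * I := by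
  have hd : Differentiable ℂ (dslope Complex.exp 0) := by
    rw [← differentiableOn_univ]
    exact (differentiableOn_dslope Filter.univ_mem).2 Complex.differentiable_exp.differentiableOn
  have hne : ∀ v ∈ Metric.closedBall (0 : ℂ) r, dslope Complex.exp 0 v ≠ 0 := by
    intro v hv
    by_cases hv0 : v = 0
    · subst hv0; simp
    · rw [dslope_of_ne _ hv0, slope_def_field]
      simp only [Complex.exp_zero, sub_zero]
      refine div_ne_zero (exp_sub_one_ne_zero_of_norm_lt hv0 ?_) hv0
      rw [mem_closedBall_zero_iff] at hv
      linarith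
  have hdiff : DifferentiableOn ℂ (fun v => Complex.exp v / dslope Complex.exp 0 v)
      (Metric.closedBall 0 r) :=
    Complex.differentiable_exp.differentiableOn.div hd.differentiableOn hne
  have key := (hdiff.diffContOnCl_ball (subset_refl _)).circleIntegral_sub_inv_smul
    (Metric.mem_ball_self h0)
  simp only [dslope_same, Complex.deriv_exp, Complex.exp_zero, smul_eq_mul] at key
  rw [div_one, mul_one] at key
  rw [← key]
  refine circleIntegral.integral_congr h0.le fun v hv => ?_
  have hv0 : v ≠ 0 := ne_zero_of_mem_sphere h0.ne' ⟨v, hv⟩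
  have := exp_sub_one_ne_zero_of_norm_lt hv0 (by rw [mem_sphere_zero_iff_norm] at hv; linarith)
  simp only [dslope_of_ne _ hv0, slope_def_field, Complex.exp_zero, sub_zero, zpow_neg_one]
  field_simp

lemma continuousOn_exp_mul_exp_sub_one_zpow {r : ℝ} (h0 : 0 < r) (h : r < 2 * Real.pi) (n : ℤ) :
    ContinuousOn (fun v : ℂ => Complex.exp v * (Complex.exp v - 1) ^ n) (Metric.sphere 0 r) := by
  refine Complex.continuous_exp.continuousOn.mul (ContinuousOn.zpow₀ (by fun_prop) _ fun v hv => ?_)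
  exact Or.inl (exp_sub_one_ne_zero_of_norm_lt (ne_zero_of_mem_sphere h0.ne' ⟨v, hv⟩)
    (by rw [mem_sphere_zero_iff_norm] at hv; linarith))

lemma circleIntegral_exp_mul_exp_sub_one_zpow {r : ℝ} (h0 : 0 < r) (h : r < 2 * Real.pi) (n : ℤ) :
    (∮ v in C(0, r), Complex.exp v * (Complex.exp v - 1) ^ n) =
      if n = -1 then 2 * Real.pi * I else 0 := by
  split_ifs with hn
  · subst hn; exact circleIntegral_exp_div_exp_sub_one h0 h
  · refine circleIntegral.integral_eq_zero_of_hasDerivWithinAt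
      (f := fun v => (Complex.exp v - 1) ^ (n + 1) / ((n + 1 : ℤ) : ℂ)) h0.le fun v hv => ?_
    have hv1 := exp_sub_one_ne_zero_of_norm_lt (ne_zero_of_mem_sphere h0.ne' ⟨v, hv⟩)
      (by rw [mem_sphere_zero_iff_norm] at hv; linarith)
    have hn1 : ((n + 1 : ℤ) : ℂ) ≠ 0 := by
      rw [Int.cast_ne_zero]; lia
    have := ((hasDerivAt_zpow (n + 1) (Complex.exp v - 1) (Or.inl hv1)).comp v
      ((Complex.hasDerivAt_exp v).sub_const 1)).div_const ((n + 1 : ℤ) : ℂ)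
    refine (this.congr_deriv ?_).hasDerivWithinAt
    rw [add_sub_cancel_right]
    field_simp

lemma circleIntegral_exp_mul_exp_pow_mul_exp_sub_one_zpow {r : ℝ} (h0 : 0 < r)
    (h : r < 2 * Real.pi) (N m : ℕ) :
    (∮ v in C(0, r), Complex.exp v * Complex.exp v ^ N * (Complex.exp v - 1) ^ (-(m + 1 : ℤ))) =
      2 * Real.pi * I * N.choose m := by
  have : Set.EqOn
      (fun v => Complex.exp v * Complex.exp v ^ N * (Complex.exp v - 1) ^ (-(m + 1 : ℤ)))
      (fun v => ∑ j ∈ Finset.range (N + 1),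
        (N.choose j : ℂ) * (Complex.exp v * (Complex.exp v - 1) ^ ((j : ℤ) - (m + 1))))
      (Metric.sphere 0 r) := by
    intro v hv
    have hv1 := exp_sub_one_ne_zero_of_norm_lt (ne_zero_of_mem_sphere h0.ne' ⟨v, hv⟩)
      (by rw [mem_sphere_zero_iff_norm] at hv; linarith)
    have hx : Complex.exp v ^ N =
        ∑ j ∈ Finset.range (N + 1), (Complex.exp v - 1) ^ j * (N.choose j : ℂ) := by
      simpa using add_pow (Complex.exp v - 1) 1 N
    simp only
    rw [hx, Finset.mul_sum, Finset.sum_mul]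
    refine Finset.sum_congr rfl fun j _ => ?_
    rw [sub_eq_add_neg (j : ℤ), zpow_add₀ hv1, zpow_natCast]
    ring
  rw [circleIntegral.integral_congr h0.le this, circleIntegral.integral_fun_sum]
  · simp only [circleIntegral.integral_const_mul, circleIntegral_exp_mul_exp_sub_one_zpow h0 h]
    have : ∀ j : ℕ, ((j : ℤ) - (m + 1) = -1) ↔ j = m := by intro j; lia
    simp only [this, mul_ite, mul_zero, Finset.sum_ite_eq', Finset.mem_range]
    split_ifs with hm
    · ring
    · rw [Nat.choose_eq_zero_of_lt (by lia)]; simp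
  · intro j _
    exact ((continuousOn_exp_mul_exp_sub_one_zpow h0 h _).const_mul _ ).circleIntegrable h0.le

lemma exists_differentiable_pow_eq (N : ℕ) : ∃ P : ℂ → ℂ, Differentiable ℂ P ∧
    ∀ u, (1 + u) ^ N = 1 + N * u + N.choose 2 * u ^ 2 + u ^ 3 * P u := by
  induction N with
  | zero => exact ⟨0, differentiable_const 0, by simp⟩
  | succ N ih =>
    obtain ⟨P, hP, h⟩ := ih
    refine ⟨fun u => N.choose 2 + (1 + u) * P u, by fun_prop, fun u => ?_⟩
    rw [pow_succ, h, Nat.choose_succ_succ' N 1]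
    push_cast
    simp
    ring

lemma exists_differentiableOn_pow_div_pow_eq (N : ℕ) {c : ℂ} (hc : c ≠ 0) (y : ℂ) :
    ∃ R : ℂ → ℂ, DifferentiableOn ℂ R {u | c + y * u ≠ 0} ∧ ∀ u, c + y * u ≠ 0 →
      (1 + u) ^ N / (c + y * u) ^ 3 = 1 / c ^ 3 + (N / c ^ 3 - 3 * y / c ^ 4) * u
        + (N.choose 2 / c ^ 3 - 3 * N * y / c ^ 4 + 6 * y ^ 2 / c ^ 5) * u ^ 2 + u ^ 3 * R u := by
  obtain ⟨P, hP, hPN⟩ := exists_differentiable_pow_eq N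
  refine ⟨fun u => P u / (c + y * u) ^ 3
    - (1 + N * u + N.choose 2 * u ^ 2) * (10 * c ^ 2 * y ^ 3 + 15 * c * y ^ 4 * u + 6 * y ^ 5 * u ^ 2)
      / c ^ 5 / (c + y * u) ^ 3
    + (6 * y ^ 2 * N / c ^ 5 - 3 * y * N.choose 2 / c ^ 4 + 6 * y ^ 2 * N.choose 2 / c ^ 5 * u),
    ?_, fun u hu => ?_⟩
  · have h3 : ∀ u ∈ {u | c + y * u ≠ 0}, (c + y * u) ^ 3 ≠ 0 := fun u hu => pow_ne_zero 3 hu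
    exact ((hP.differentiableOn.div (by fun_prop) h3).sub
      (DifferentiableOn.div (by fun_prop) (by fun_prop) h3)).add (by fun_prop)
  · obtain ⟨D, hD⟩ : ∃ D, D = c + y * u := ⟨_, rfl⟩
    beta_reduce
    rw [hPN]
    rw [← hD] at hu ⊢
    field_simp
    rw [hD]
    ring

lemma circleIntegral_exp_mul_pow_div_pow_mul_sub_one_pow {r : ℝ} (h0 : 0 < r)
    (h : r < 2 * Real.pi) (N : ℕ) {y : ℂ} (hy : y ≠ 1)
    (hne : ∀ v ∈ Metric.closedBall (0 : ℂ) r, y * Complex.exp v - 1 ≠ 0) :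
    (∮ v in C(0, r), Complex.exp v * Complex.exp v ^ N /
        ((Complex.exp v - 1) ^ 3 * (y * Complex.exp v - 1) ^ 3)) =
      2 * Real.pi * I * (N.choose 2 / (y - 1) ^ 3 - 3 * N * y / (y - 1) ^ 4
        + 6 * y ^ 2 / (y - 1) ^ 5) := by
  obtain ⟨R, hR, hRN⟩ := exists_differentiableOn_pow_div_pow_eq N (sub_ne_zero.2 hy) y
  have hmem : Set.MapsTo (fun v => Complex.exp v - 1) (Metric.closedBall 0 r)
      {u | (y - 1) + y * u ≠ 0} := by
    intro v hv
    have := hne v hv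
    simp only [Set.mem_ofPred_eq]
    convert this using 1
    ring
  have hRd : DifferentiableOn ℂ (fun v => Complex.exp v * R (Complex.exp v - 1))
      (Metric.closedBall 0 r) :=
    Complex.differentiable_exp.differentiableOn.mul
      (hR.comp (Complex.differentiable_exp.sub_const 1).differentiableOn hmem)
  have hR0 : (∮ v in C(0, r), Complex.exp v * R (Complex.exp v - 1)) = 0 :=
    (hRd.diffContOnCl_ball (subset_refl _)).circleIntegral_eq_zero h0.le
  have hint (n : ℤ) (α : ℂ) :
      CircleIntegrable (fun v => α * (Complex.exp v * (Complex.exp v - 1) ^ n)) 0 r :=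
    ((continuousOn_exp_mul_exp_sub_one_zpow h0 h n).const_mul α).circleIntegrable h0.le
  have hadd {g k : ℂ → ℂ} (hg : CircleIntegrable g 0 r) (hk : CircleIntegrable k 0 r) :
      CircleIntegrable (fun v => g v + k v) 0 r := hg.add hk
  have hRint : CircleIntegrable (fun v => Complex.exp v * R (Complex.exp v - 1)) 0 r :=
    (hRd.continuousOn.mono Metric.sphere_subset_closedBall).circleIntegrable h0.le
  have heq : Set.EqOn
      (fun v => Complex.exp v * Complex.exp v ^ N /
        ((Complex.exp v - 1) ^ 3 * (y * Complex.exp v - 1) ^ 3))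
      (fun v => 1 / (y - 1) ^ 3 * (Complex.exp v * (Complex.exp v - 1) ^ (-3 : ℤ))
        + (N / (y - 1) ^ 3 - 3 * y / (y - 1) ^ 4) *
          (Complex.exp v * (Complex.exp v - 1) ^ (-2 : ℤ))
        + (N.choose 2 / (y - 1) ^ 3 - 3 * N * y / (y - 1) ^ 4 + 6 * y ^ 2 / (y - 1) ^ 5) *
          (Complex.exp v * (Complex.exp v - 1) ^ (-1 : ℤ))
        + Complex.exp v * R (Complex.exp v - 1)) (Metric.sphere 0 r) := by
    intro v hv
    have hv1 := exp_sub_one_ne_zero_of_norm_lt (ne_zero_of_mem_sphere h0.ne' ⟨v, hv⟩)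
      (by rw [mem_sphere_zero_iff_norm] at hv; linarith)
    have hD := hmem (Metric.sphere_subset_closedBall hv)
    have := hRN _ hD
    rw [show (y - 1) + y * (Complex.exp v - 1) = y * Complex.exp v - 1 by ring,
      add_sub_cancel] at this
    have h3 : (Complex.exp v - 1) ^ (-3 : ℤ) = ((Complex.exp v - 1) ^ 3)⁻¹ := by
      rw [zpow_neg]; norm_cast
    have h2 : (Complex.exp v - 1) ^ (-2 : ℤ) = ((Complex.exp v - 1) ^ 2)⁻¹ := by
      rw [zpow_neg]; norm_cast
    simp only [h3, h2, zpow_neg_one]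
    rw [mul_comm ((Complex.exp v - 1) ^ 3), ← div_div, mul_div_assoc, this]
    field_simp
  rw [circleIntegral.integral_congr h0.le heq,
    circleIntegral.integral_add (hadd (hadd (hint _ _) (hint _ _)) (hint _ _)) hRint,
    circleIntegral.integral_add (hadd (hint _ _) (hint _ _)) (hint _ _),
    circleIntegral.integral_add (hint _ _) (hint _ _), hR0]
  simp only [circleIntegral.integral_const_mul, circleIntegral_exp_mul_exp_sub_one_zpow h0 h]
  norm_num
  ring

lemma sum_antidiagonal_add_choose_mul_add_choose (d e n : ℕ) :
    ∑ ij ∈ Finset.HasAntidiagonal.antidiagonal n, (d + ij.1).choose d * (e + ij.2).choose e =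
      (d + e + 1 + n).choose (d + e + 1) := by
  have h := congrArg (fun u : (PowerSeries ℤ)ˣ => PowerSeries.coeff n u.val)
    (PowerSeries.invOneSubPow_add ℤ (d + 1) (e + 1))
  have h1 : d + 1 + (e + 1) = (d + e + 1) + 1 := by ring
  simp only [h1, Units.val_mul, PowerSeries.invOneSubPow_val_succ_eq_mk_add_choose,
    PowerSeries.coeff_mul, PowerSeries.coeff_mk] at h
  exact_mod_cast h.symm

lemma card_piAntidiag_univ_fin_three (n : ℕ) :
    (Finset.piAntidiag (Finset.univ : Finset (Fin 3)) n).card = (n + 2).choose 2 := by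
  rw [← Finset.map_sym_eq_piAntidiag, Finset.card_map, Finset.sym_univ, Finset.card_univ,
    Sym.card_sym_eq_choose, Fintype.card_fin, show 3 + n - 1 = n + 2 by lia, Nat.choose_symm_add]

lemma natCard_triples_eq_sum {a b : ℕ} (hab : b ≤ a) :
    Nat.card {t : (Fin 3 → ℕ) × (Fin 3 → ℕ) × (Fin 3 → ℕ) //
        (∑ s, t.1 s) + (∑ s, t.2.2 s) = a ∧ (∑ s, t.2.1 s) + (∑ s, t.2.2 s) = b} =
      ∑ p ∈ Finset.HasAntidiagonal.antidiagonal b,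
        (a - p.1 + 2).choose 2 * ((p.2 + 2).choose 2 * (p.1 + 2).choose 2) := by
  let T (n : ℕ) := Finset.piAntidiag (Finset.univ : Finset (Fin 3)) n
  rw [Nat.subtype_card ((Finset.HasAntidiagonal.antidiagonal b).biUnion
    fun p => T (a - p.1) ×ˢ T p.2 ×ˢ T p.1), Finset.card_biUnion]
  · simp [T, Finset.card_product, card_piAntidiag_univ_fin_three]
  · rintro ⟨x, y⟩ hx ⟨z, w⟩ hz hne
    rw [Function.onFun, Finset.disjoint_left]
    rintro ⟨i, j, k⟩ h1 h2
    simp [T] at h1 h2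
    exact hne (Prod.ext (h1.2.2.symm.trans h2.2.2) (h1.2.1.symm.trans h2.2.1))
  · rintro ⟨i, j, k⟩
    simp only [T, Finset.mem_biUnion, Finset.HasAntidiagonal.mem_antidiagonal, Finset.mem_product,
      Finset.mem_piAntidiag, Finset.mem_univ, implies_true, and_true, Prod.exists]
    constructor
    · rintro ⟨x, y, h, h1, h2, h3⟩
      lia
    · rintro ⟨h1, h2⟩
      exact ⟨_, _, (add_comm _ _).trans h2, by lia, rfl, rfl⟩

lemma natCard_triples_eq_choose {a b : ℕ} (hab : b ≤ a) :
    (Nat.card {t : (Fin 3 → ℕ) × (Fin 3 → ℕ) × (Fin 3 → ℕ) //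
        (∑ s, t.1 s) + (∑ s, t.2.2 s) = a ∧ (∑ s, t.2.1 s) + (∑ s, t.2.2 s) = b} : ℂ) =
      (a + 5).choose 2 * (b + 5).choose 5 - 3 * (a + 5) * (b + 6).choose 6
        + 6 * (b + 7).choose 7 := by
  have key (d : ℕ) : ((b + (d + 3)).choose (d + 3) : ℂ) =
      ∑ p ∈ Finset.HasAntidiagonal.antidiagonal b, ((d + p.1).choose d : ℂ) * (2 + p.2).choose 2 := by
    rw [add_comm b]
    exact_mod_cast (sum_antidiagonal_add_choose_mul_add_choose d 2 b).symm
  rw [natCard_triples_eq_sum hab, key 2, key 3, key 4]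
  push_cast
  simp only [Finset.mul_sum]
  rw [← Finset.sum_sub_distrib, ← Finset.sum_add_distrib]
  refine Finset.sum_congr rfl fun p hp => ?_
  obtain ⟨c, rfl⟩ : ∃ c, a = p.1 + c := ⟨a - p.1, by
    have := Finset.HasAntidiagonal.mem_antidiagonal.1 hp; lia⟩
  have h3 : ((3 + p.1).choose 3 : ℂ) = (p.1 + 3) * (p.1 + 2) * (p.1 + 1) / 6 := by
    have := Nat.cast_choose_eq_ascPochhammer_div ℂ (3 + p.1) 3
    rw [this]
    simp [show 3 + p.1 - 2 = p.1 + 1 by lia, ascPochhammer, Nat.factorial]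
    ring
  have h4 : ((4 + p.1).choose 4 : ℂ) = (p.1 + 4) * (p.1 + 3) * (p.1 + 2) * (p.1 + 1) / 24 := by
    have := Nat.cast_choose_eq_ascPochhammer_div ℂ (4 + p.1) 4
    rw [this]
    simp [show 4 + p.1 - 3 = p.1 + 1 by lia, ascPochhammer, Nat.factorial]
    ring
  simp only [add_tsub_cancel_left, h3, h4, Nat.cast_choose_two]
  push_cast
  ring

lemma two_pi_I_inv_mul_circleIntegral_f {a b : ℕ} {r : ℝ} {v₂ : ℂ} (h0 : 0 < r) (hr : r < ‖v₂‖)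
    (h2 : ‖v₂‖ < Real.pi) :
    1 / (2 * Real.pi * I) * (∮ v₁ in C(0, r), f a b v₁ v₂) =
      (a + 5).choose 2 *
          (Complex.exp v₂ * Complex.exp v₂ ^ (b + 5) * (Complex.exp v₂ - 1) ^ (-((5 : ℕ) + 1 : ℤ)))
        - 3 * (a + 5) *
          (Complex.exp v₂ * Complex.exp v₂ ^ (b + 6) * (Complex.exp v₂ - 1) ^ (-((6 : ℕ) + 1 : ℤ)))
        + 6 *
          (Complex.exp v₂ * Complex.exp v₂ ^ (b + 7) * (Complex.exp v₂ - 1) ^ (-((7 : ℕ) + 1 : ℤ))) := by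
  have hv2 : v₂ ≠ 0 := norm_pos_iff.1 (h0.trans hr)
  have hy := exp_sub_one_ne_zero_of_norm_lt hv2 (by linarith [Real.pi_pos])
  have hne : ∀ v ∈ Metric.closedBall (0 : ℂ) r, Complex.exp v₂ * Complex.exp v - 1 ≠ 0 := by
    intro v hv
    rw [mem_closedBall_zero_iff] at hv
    rw [← Complex.exp_add]
    refine exp_sub_one_ne_zero_of_norm_lt (fun h => ?_) ?_
    · rw [eq_neg_of_add_eq_zero_left h, norm_neg] at hr
      linarith
    · linarith [norm_add_le v₂ v]
  have heq : Set.EqOn (fun v => f a b v v₂)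
      (fun v => Complex.exp v₂ ^ (b + 6) / (Complex.exp v₂ - 1) ^ 3 *
        (Complex.exp v * Complex.exp v ^ (a + 5) /
          ((Complex.exp v - 1) ^ 3 * (Complex.exp v₂ * Complex.exp v - 1) ^ 3)))
      (Metric.sphere 0 r) := by
    intro v hv
    have hv1 := exp_sub_one_ne_zero_of_norm_lt (ne_zero_of_mem_sphere h0.ne' ⟨v, hv⟩)
      (by rw [mem_sphere_zero_iff_norm] at hv; linarith [Real.pi_pos])
    have hD := hne v (Metric.sphere_subset_closedBall hv)
    have hx0 := Complex.exp_ne_zero v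
    have hy0 := Complex.exp_ne_zero v₂
    simp only [f]
    rw [Complex.exp_add, Complex.exp_nat_mul, Complex.exp_nat_mul, neg_add, Complex.exp_add,
      Complex.exp_neg, Complex.exp_neg]
    generalize Complex.exp v = x at *
    generalize Complex.exp v₂ = y at *
    rw [show 1 - x⁻¹ = (x - 1) / x by field_simp, show 1 - y⁻¹ = (y - 1) / y by field_simp,
      show 1 - x⁻¹ * y⁻¹ = (y * x - 1) / (x * y) by field_simp]
    field_simp
    ring
  rw [circleIntegral.integral_congr h0.le heq, circleIntegral.integral_const_mul,
    circleIntegral_exp_mul_pow_div_pow_mul_sub_one_pow h0 (by linarith [Real.pi_pos]) _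
      (sub_ne_zero.1 hy) hne]
  have hpi : (2 * Real.pi * I : ℂ) ≠ 0 := Complex.two_pi_I_ne_zero
  have hz (n : ℕ) : (Complex.exp v₂ - 1) ^ (-(n + 1 : ℤ)) = ((Complex.exp v₂ - 1) ^ (n + 1))⁻¹ := by
    rw [zpow_neg]; norm_cast
  simp only [hz]
  generalize Complex.exp v₂ = y at *
  rw [mul_left_comm, ← mul_assoc (1 / (2 * Real.pi * I : ℂ)), one_div_mul_cancel hpi]
  push_cast
  field_simp
  ring

/-- The iterated residue `res_{v₂=0} res_{v₁=0} f`, computed as iterated circle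
integrals with radii `0 < ε₁ < ε₂ < π` (the inner residue in `v₁` is taken with
`v₂` a fixed nonzero parameter on the circle `|v₂| = ε₂`), equals the number of
9-tuples of nonnegative integers `(i,j,k)` with `∑ i + ∑ k = a`, `∑ j + ∑ k = b`. -/
theorem iterated_residue_eq_partition_count (a b : ℕ) (hab : b ≤ a)
    (ε₁ ε₂ : ℝ) (h₁ : 0 < ε₁) (h₁₂ : ε₁ < ε₂) (h₂ : ε₂ < Real.pi) :
    (1 / (2 * Real.pi * Complex.I)) *
        (∮ v₂ in C(0, ε₂), (1 / (2 * Real.pi * Complex.I)) *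
          ∮ v₁ in C(0, ε₁), f a b v₁ v₂) =
      (Nat.card {t : (Fin 3 → ℕ) × (Fin 3 → ℕ) × (Fin 3 → ℕ) //
        (∑ s, t.1 s) + (∑ s, t.2.2 s) = a ∧ (∑ s, t.2.1 s) + (∑ s, t.2.2 s) = b} : ℂ) := by
  have hε₂ : 0 < ε₂ := h₁.trans h₁₂
  have hε₂' : ε₂ < 2 * Real.pi := by linarith [Real.pi_pos]
  have hpi : (2 * Real.pi * I : ℂ) ≠ 0 := Complex.two_pi_I_ne_zero
  have hint (α : ℂ) (N m : ℕ) : CircleIntegrable (fun v => α *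
      (Complex.exp v * Complex.exp v ^ N * (Complex.exp v - 1) ^ (-(m + 1 : ℤ)))) 0 ε₂ := by
    refine ContinuousOn.circleIntegrable hε₂.le ?_
    have := ((continuousOn_exp_mul_exp_sub_one_zpow hε₂ hε₂' (-(m + 1 : ℤ))).mul
      (Complex.continuous_exp.pow N).continuousOn).const_mul α
    exact this.congr fun v _ => by simp only [Pi.mul_apply, Pi.pow_apply]; ring
  have heq : Set.EqOn (fun v₂ => 1 / (2 * Real.pi * I) * ∮ v₁ in C(0, ε₁), f a b v₁ v₂)
      (fun v => (a + 5).choose 2 *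
          (Complex.exp v * Complex.exp v ^ (b + 5) * (Complex.exp v - 1) ^ (-((5 : ℕ) + 1 : ℤ)))
        - 3 * (a + 5) *
          (Complex.exp v * Complex.exp v ^ (b + 6) * (Complex.exp v - 1) ^ (-((6 : ℕ) + 1 : ℤ)))
        + 6 *
          (Complex.exp v * Complex.exp v ^ (b + 7) * (Complex.exp v - 1) ^ (-((7 : ℕ) + 1 : ℤ))))
      (Metric.sphere 0 ε₂) := fun v₂ hv₂ => by
    rw [mem_sphere_zero_iff_norm] at hv₂
    exact two_pi_I_inv_mul_circleIntegral_f h₁ (by rwa [hv₂]) (by rwa [hv₂])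
  have hsub {g k : ℂ → ℂ} (hg : CircleIntegrable g 0 ε₂) (hk : CircleIntegrable k 0 ε₂) :
      CircleIntegrable (fun v => g v - k v) 0 ε₂ := hg.sub hk
  rw [circleIntegral.integral_congr hε₂.le heq,
    circleIntegral.integral_add (hsub (hint _ _ _) (hint _ _ _)) (hint _ _ _),
    circleIntegral.integral_sub (hint _ _ _) (hint _ _ _)]
  simp only [circleIntegral.integral_const_mul,
    circleIntegral_exp_mul_exp_pow_mul_exp_sub_one_zpow hε₂ hε₂']
  rw [natCard_triples_eq_choose hab]
  field_simp
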